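/- Let C be a regular Ord-category and f: X→Y a morphism. (a) If f is an so-morphism, then f_*∘f^* ≅ I_Y. (b) If moreover the preorder ≼ on each hom-set of C is a partial order, then f is an so-morphism if and only if f_*∘f^* ≅ I_Y. -/

import Mathlib

open CategoryTheory

universe w v u

/-- An `Ord`-enrichment of a category: a preorder on each hom-set,
preserved by composition on both sides. -/
class OrdEnrichment (C : Type u) [Category.{v} C] : Type (max u v) where
  ord : ∀ {X Y : C}, (X ⟶ Y) → (X ⟶ Y) → Prop
  ord_refl : ∀ {X Y : C} (f : X ⟶ Y), ord f f
  ord_trans : ∀ {X Y : C} {f g h : X ⟶ Y}, ord f g → ord g h → ord f h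
  precomp_ord : ∀ {X Y Z : C} (e : X ⟶ Y) {f g : Y ⟶ Z}, ord f g → ord (e ≫ f) (e ≫ g)
  postcomp_ord : ∀ {X Y Z : C} {f g : X ⟶ Y} (h : Y ⟶ Z), ord f g → ord (f ≫ h) (g ≫ h)

/-- The preorder on hom-sets of an `Ord`-category. -/
def homLe {C : Type u} [Category.{v} C] [OrdEnrichment C] {X Y : C} (f g : X ⟶ Y) : Prop :=
  OrdEnrichment.ord f g

infixl:50 " ≼ " => homLe

section

variable {C : Type u} [Category.{v} C] [OrdEnrichment C]

/-- A full (ff-) morphism. -/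
def IsFF {X Y : C} (m : X ⟶ Y) : Prop :=
  ∀ {A : C} (a a' : A ⟶ X), (a ≫ m) ≼ (a' ≫ m) → a ≼ a'

/-- An ff-monomorphism: a full monomorphism. -/
def IsFFMono {X Y : C} (m : X ⟶ Y) : Prop := IsFF m ∧ Mono m

/-- An so-morphism: a morphism left orthogonal to every ff-monomorphism. -/
def IsSO {A B : C} (e : A ⟶ B) : Prop :=
  ∀ {X Y : C} (m : X ⟶ Y), IsFFMono m → ∀ (u : A ⟶ X) (v : B ⟶ Y),
    u ≫ m = e ≫ v → ∃ d : B ⟶ X, e ≫ d = u ∧ d ≫ m = v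

/-- The (strict) comma object square for the ordered pair `(f, g)`. -/
structure IsCommaSq {X Y Z : C} (f : X ⟶ Y) (g : Z ⟶ Y) (P : C)
    (π₁ : P ⟶ X) (π₂ : P ⟶ Z) : Prop where
  le : (π₁ ≫ f) ≼ (π₂ ≫ g)
  lift : ∀ {A : C} (α : A ⟶ X) (β : A ⟶ Z), (α ≫ f) ≼ (β ≫ g) →
    ∃! h : A ⟶ P, h ≫ π₁ = α ∧ h ≫ π₂ = β
  lift_ord : ∀ {A : C} {h h' : A ⟶ P}, (h ≫ π₁) ≼ (h' ≫ π₁) → (h ≫ π₂) ≼ (h' ≫ π₂) → h ≼ h'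

/-- A 2-pullback square (pullback with the `Ord`-enriched universal property). -/
structure Is2Pullback {X Y Z : C} (f : X ⟶ Z) (g : Y ⟶ Z) (P : C)
    (p : P ⟶ X) (q : P ⟶ Y) : Prop where
  comm : p ≫ f = q ≫ g
  lift : ∀ {A : C} (a : A ⟶ X) (b : A ⟶ Y), a ≫ f = b ≫ g →
    ∃! h : A ⟶ P, h ≫ p = a ∧ h ≫ q = b
  lift_ord : ∀ {A : C} {h h' : A ⟶ P}, (h ≫ p) ≼ (h' ≫ p) → (h ≫ q) ≼ (h' ≫ q) → h ≼ h'

/-- A binary 2-product. -/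
structure Is2Product (X Y : C) (P : C) (p : P ⟶ X) (q : P ⟶ Y) : Prop where
  lift : ∀ {A : C} (a : A ⟶ X) (b : A ⟶ Y), ∃! h : A ⟶ P, h ≫ p = a ∧ h ≫ q = b
  lift_ord : ∀ {A : C} {h h' : A ⟶ P}, (h ≫ p) ≼ (h' ≫ p) → (h ≫ q) ≼ (h' ≫ q) → h ≼ h'

/-- A 2-equalizer. -/
structure Is2Equalizer {X Y : C} (f g : X ⟶ Y) (E : C) (i : E ⟶ X) : Prop where
  comm : i ≫ f = i ≫ g
  lift : ∀ {A : C} (a : A ⟶ X), a ≫ f = a ≫ g → ∃! h : A ⟶ E, h ≫ i = a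
  lift_ord : ∀ {A : C} {h h' : A ⟶ E}, (h ≫ i) ≼ (h' ≫ i) → h ≼ h'

/-- A bicoinserter of a parallel pair. -/
structure IsBicoinserter {X A E : C} (a b : X ⟶ A) (e : A ⟶ E) : Prop where
  le : (a ≫ e) ≼ (b ≫ e)
  desc : ∀ {F : C} (f : A ⟶ F), (a ≫ f) ≼ (b ≫ f) →
    ∃ t : E ⟶ F, (e ≫ t) ≼ f ∧ f ≼ (e ≫ t)
  desc_ord : ∀ {F : C} {f f' : A ⟶ F} {t t' : E ⟶ F},
    (e ≫ t) ≼ f → f ≼ (e ≫ t) → (e ≫ t') ≼ f' → f' ≼ (e ≫ t') → f ≼ f' → t ≼ t'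

/-- A relation from `X` to `Y` in an `Ord`-category: a jointly ff-monomorphic span. -/
structure RelStr (X Y : C) : Type (max u v) where
  obj : C
  p : obj ⟶ X
  q : obj ⟶ Y
  jointly_ff : ∀ {A : C} (a a' : A ⟶ obj), (a ≫ p) ≼ (a' ≫ p) → (a ≫ q) ≼ (a' ≫ q) → a ≼ a'
  jointly_mono : ∀ {A : C} (a a' : A ⟶ obj), a ≫ p = a' ≫ p → a ≫ q = a' ≫ q → a = a'

/-- `(x, y) ∈_A R`. -/
def RelStr.Mem {X Y : C} (R : RelStr X Y) {A : C} (x : A ⟶ X) (y : A ⟶ Y) : Prop :=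
  ∃ h : A ⟶ R.obj, h ≫ R.p = x ∧ h ≫ R.q = y

/-- `R ⊆ S`: `R` factors through `S` (over `X × Y`). -/
def RelStr.Sub {X Y : C} (R S : RelStr X Y) : Prop :=
  ∃ φ : R.obj ⟶ S.obj, φ ≫ S.p = R.p ∧ φ ≫ S.q = R.q

/-- `R ≅ S`: mutual factorisation. -/
def RelStr.Iso {X Y : C} (R S : RelStr X Y) : Prop := R.Sub S ∧ S.Sub R

/-- The opposite relation `R°`. -/
def RelStr.op {X Y : C} (R : RelStr X Y) : RelStr Y X where
  obj := R.obj
  p := R.q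
  q := R.p
  jointly_ff := fun a a' h1 h2 => R.jointly_ff a a' h2 h1
  jointly_mono := fun a a' h1 h2 => R.jointly_mono a a' h2 h1

/-- A relation is an (order) ideal when it is closed under lowering the first
coordinate and raising the second coordinate. -/
def IsIdealRel {X Y : C} (R : RelStr X Y) : Prop :=
  ∀ {A : C} (x x' : A ⟶ X) (y y' : A ⟶ Y), x' ≼ x → R.Mem x y → y ≼ y' → R.Mem x' y'

/-- The relation `f_♯` given by the span `(1_X, f)`. -/
def sharpRel {X Y : C} (f : X ⟶ Y) : RelStr X Y where
  obj := X
  p := 𝟙 X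
  q := f
  jointly_ff := fun a a' h1 _ => by simpa using h1
  jointly_mono := fun a a' h1 _ => by simpa using h1

/-- The relation `f°`, the opposite of `f_♯`. -/
def cosharpRel {X Y : C} (f : X ⟶ Y) : RelStr Y X := (sharpRel f).op

/-- `M` is the meet (intersection) `R ∧ S` of two relations. -/
def IsMeetRel {X Y : C} (R S M : RelStr X Y) : Prop :=
  M.Sub R ∧ M.Sub S ∧
    ∀ {A : C} (x : A ⟶ X) (y : A ⟶ Y), R.Mem x y → S.Mem x y → M.Mem x y

/-- `T` is the composite `S ∘ R` of the relations `R : X ↬ Y` and `S : Y ↬ Z`,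
obtained via the (so-morphism, ff-monomorphism) factorisation of the span
given by the 2-pullback over the middle object. -/
def IsCompositeRel {X Y Z : C} (R : RelStr X Y) (S : RelStr Y Z) (T : RelStr X Z) : Prop :=
  ∃ (P : C) (p₁ : P ⟶ R.obj) (p₂ : P ⟶ S.obj) (e : P ⟶ T.obj),
    Is2Pullback R.q S.p P p₁ p₂ ∧ IsSO e ∧ e ≫ T.p = p₁ ≫ R.p ∧ e ≫ T.q = p₂ ≫ S.q

/-- `R` is the ideal `f_* = f / 1_Y : X ↬ Y`. -/
def IsStarRel {X Y : C} (f : X ⟶ Y) (R : RelStr X Y) : Prop :=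
  IsCommaSq f (𝟙 Y) R.obj R.p R.q

/-- `R` is the ideal `f^* = 1_Y / f : Y ↬ X`. -/
def IsCostarRel {X Y : C} (f : X ⟶ Y) (R : RelStr Y X) : Prop :=
  IsCommaSq (𝟙 Y) f R.obj R.p R.q

/-- `R` is the identity ideal `I_X = 1_X / 1_X`. -/
def IsIdRel (X : C) (R : RelStr X X) : Prop :=
  IsCommaSq (𝟙 X) (𝟙 X) R.obj R.p R.q

/-- `S` is the 2-pullback of the relation `R ↣ X × Y` along `f × g`. -/
def IsRelPullback {X Y U V : C} (R : RelStr X Y) (f : U ⟶ X) (g : V ⟶ Y)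
    (S : RelStr U V) : Prop :=
  ∃ h : S.obj ⟶ R.obj, h ≫ R.p = S.p ≫ f ∧ h ≫ R.q = S.q ≫ g ∧
    ∀ {A : C} (a : A ⟶ U) (b : A ⟶ V) (c : A ⟶ R.obj),
      c ≫ R.p = a ≫ f → c ≫ R.q = b ≫ g →
      ∃ d : A ⟶ S.obj, d ≫ S.p = a ∧ d ≫ S.q = b ∧ d ≫ h = c

/-- A binary 2-coproduct. -/
structure Is2Coproduct (X Y : C) (P : C) (i : X ⟶ P) (j : Y ⟶ P) : Prop where
  desc : ∀ {A : C} (a : X ⟶ A) (b : Y ⟶ A), ∃! h : P ⟶ A, i ≫ h = a ∧ j ≫ h = b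
  desc_ord : ∀ {A : C} {h h' : P ⟶ A}, (i ≫ h) ≼ (i ≫ h') → (j ≫ h) ≼ (j ≫ h') → h ≼ h'

/-- A ternary 2-coproduct. -/
structure Is3Coproduct (X Y Z : C) (P : C) (i : X ⟶ P) (j : Y ⟶ P) (k : Z ⟶ P) : Prop where
  desc : ∀ {A : C} (a : X ⟶ A) (b : Y ⟶ A) (c : Z ⟶ A),
    ∃! h : P ⟶ A, i ≫ h = a ∧ j ≫ h = b ∧ k ≫ h = c
  desc_ord : ∀ {A : C} {h h' : P ⟶ A},
    (i ≫ h) ≼ (i ≫ h') → (j ≫ h) ≼ (j ≫ h') → (k ≫ h) ≼ (k ≫ h') → h ≼ h'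

/-- Reflexivity of a relation on `X`: the diagonal factors through it. -/
def ReflexiveRel {X : C} (R : RelStr X X) : Prop := R.Mem (𝟙 X) (𝟙 X)

/-- Transitivity of a relation on `X`: `R ∘ R ⊆ R`. -/
def TransitiveRel {X : C} (R : RelStr X X) : Prop :=
  ∀ T : RelStr X X, IsCompositeRel R R T → T.Sub R

/-- A congruence: a reflexive and transitive ideal. -/
def IsCongruence {X : C} (R : RelStr X X) : Prop :=
  IsIdealRel R ∧ ReflexiveRel R ∧ TransitiveRel R

/-- An effective congruence: `R ≅ f^* ∘ f_*` for some morphism `f`. -/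
def EffectiveCongruence {X : C} (R : RelStr X X) : Prop :=
  ∃ (Y : C) (f : X ⟶ Y) (Fstar : RelStr X Y) (Fco : RelStr Y X) (T : RelStr X X),
    IsStarRel f Fstar ∧ IsCostarRel f Fco ∧ IsCompositeRel Fstar Fco T ∧ R.Iso T

/-- The `Ord`-enriched difunctionality property of a relation. -/
def OrdDifunctional {X Y : C} (D : RelStr X Y) : Prop :=
  ∀ {A : C} (x u u' : A ⟶ X) (y y' v : A ⟶ Y),
    D.Mem x y → y ≼ y' → D.Mem u y' → u ≼ u' → D.Mem u' v → D.Mem x v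

end

/-- A regular `Ord`-category: finite weighted limits, an
(so-morphism, ff-monomorphism) factorisation system, so-morphisms stable under
2-pullbacks, and every so-morphism the bicoinserter of its comma object projections. -/
structure IsRegularOrd (C : Type u) [Category.{v} C] [OrdEnrichment C] : Prop where
  hasTerminal : ∃ T : C, ∀ A : C, ∃ f : A ⟶ T, ∀ g : A ⟶ T, g = f
  has2Products : ∀ X Y : C, ∃ (P : C) (p : P ⟶ X) (q : P ⟶ Y), Is2Product X Y P p q
  has2Equalizers : ∀ {X Y : C} (f g : X ⟶ Y), ∃ (E : C) (i : E ⟶ X), Is2Equalizer f g E i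
  has2Pullbacks : ∀ {X Y Z : C} (f : X ⟶ Z) (g : Y ⟶ Z),
    ∃ (P : C) (p : P ⟶ X) (q : P ⟶ Y), Is2Pullback f g P p q
  hasCommaObjects : ∀ {X Y Z : C} (f : X ⟶ Y) (g : Z ⟶ Y),
    ∃ (P : C) (p : P ⟶ X) (q : P ⟶ Z), IsCommaSq f g P p q
  fact : ∀ {X Y : C} (f : X ⟶ Y), ∃ (I : C) (e : X ⟶ I) (m : I ⟶ Y),
    IsSO e ∧ IsFFMono m ∧ e ≫ m = f
  so_pullback_stable : ∀ {X Y Z P : C} (f : X ⟶ Z) (g : Y ⟶ Z) (p : P ⟶ X) (q : P ⟶ Y),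
    Is2Pullback f g P p q → IsSO g → IsSO p
  so_bicoinserter : ∀ {A B P : C} (e : A ⟶ B), IsSO e →
    ∀ (π₁ π₂ : P ⟶ A), IsCommaSq e e P π₁ π₂ → IsBicoinserter π₁ π₂ e

/-- An `Ord`-Mal'tsev category: every ideal is `Ord`-difunctional. -/
def IsOrdMaltsev (C : Type u) [Category.{v} C] [OrdEnrichment C] : Prop :=
  ∀ (X Y : C) (D : RelStr X Y), IsIdealRel D → OrdDifunctional D

/-- An `Ord`-W-Mal'tsev object: every ideal is `Ord`-difunctional with respect to
generalised elements with domain `Y`. -/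
def IsOrdWMaltsevObj {C : Type u} [Category.{v} C] [OrdEnrichment C] (Y : C) : Prop :=
  ∀ (X Z : C) (R : RelStr X Z), IsIdealRel R →
    ∀ (x u u' : Y ⟶ X) (z z' v : Y ⟶ Z),
      R.Mem x z → z ≼ z' → R.Mem u z' → u ≼ u' → R.Mem u' v → R.Mem x v

/-!
Relations are treated through their generalised elements: a pair lies in a composite `S ∘ R` iff,
after restriction along some so-morphism `g`, it is linked by a middle element. For `f_* ∘ f^*` this
says that `(y, y')` belongs to the composite iff `g ≫ y ≼ x ≫ f ≼ g ≫ y'` for some so-morphism `g`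
and some `x`. So-morphisms reflect the order of hom-sets, hence always `f_* ∘ f^* ⊆ I_Y`. The
reverse inclusion is tested on the diagonal `(1_Y, 1_Y)`, where it asks for an so-morphism `g` that
factors through `f` up to the equivalence `≼ ∩ ≽`; stability under 2-pullbacks propagates this from
the diagonal to all of `I_Y`. When `≼` is antisymmetric, `g` genuinely factors through `f`, so `f`
is an so-morphism.
-/

section

variable {C : Type u} [Category.{v} C] [OrdEnrichment C] {X Y Z A B : C}

theorem homLe.refl (f : X ⟶ Y) : f ≼ f :=
  OrdEnrichment.ord_refl f

theorem homLe.trans {f g h : X ⟶ Y} (hfg : f ≼ g) (hgh : g ≼ h) : f ≼ h :=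
  OrdEnrichment.ord_trans hfg hgh

instance : Trans (homLe (X := X) (Y := Y)) homLe homLe where
  trans := homLe.trans

theorem homLe.whiskerLeft (e : X ⟶ Y) {f g : Y ⟶ Z} (h : f ≼ g) : e ≫ f ≼ e ≫ g :=
  OrdEnrichment.precomp_ord e h

theorem homLe.whiskerRight {f g : X ⟶ Y} (h : f ≼ g) (e : Y ⟶ Z) : f ≫ e ≼ g ≫ e :=
  OrdEnrichment.postcomp_ord e h

theorem Is2Product.hom_ext {W : C} {a : W ⟶ X} {b : W ⟶ Y} (hW : Is2Product X Y W a b)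
    {s t : A ⟶ W} (ha : s ≫ a = t ≫ a) (hb : s ≫ b = t ≫ b) : s = t :=
  (hW.lift (t ≫ a) (t ≫ b)).unique ⟨ha, hb⟩ ⟨rfl, rfl⟩

theorem IsSO.of_comp {x : A ⟶ X} {f : X ⟶ Y} (h : IsSO (x ≫ f)) : IsSO f := by
  intro U V m hm u v huv
  obtain ⟨d, -, hd⟩ := h m hm (x ≫ u) v (by simp only [Category.assoc, huv])
  have := hm.2
  exact ⟨d, by rw [← cancel_mono m, Category.assoc, hd, huv], hd⟩

theorem IsSO.le_of_comp_le {e : A ⟶ X} (he : IsSO e) (hC : IsRegularOrd C) {t t' : X ⟶ Y}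
    (h : e ≫ t ≼ e ≫ t') : t ≼ t' := by
  obtain ⟨P, π₁, π₂, hP⟩ := hC.hasCommaObjects e e
  exact (hC.so_bicoinserter e he π₁ π₂ hP).desc_ord (.refl _) (.refl _) (.refl _) (.refl _) h

namespace RelStr

variable {R S : RelStr X Y} {x : A ⟶ X} {y : A ⟶ Y}

theorem mem_proj (R : RelStr X Y) : R.Mem R.p R.q :=
  ⟨𝟙 R.obj, Category.id_comp _, Category.id_comp _⟩

theorem Mem.precomp (h : R.Mem x y) (g : B ⟶ A) : R.Mem (g ≫ x) (g ≫ y) := by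
  obtain ⟨r, rfl, rfl⟩ := h
  exact ⟨g ≫ r, Category.assoc _ _ _, Category.assoc _ _ _⟩

theorem Sub.mem (h : R.Sub S) (hxy : R.Mem x y) : S.Mem x y := by
  obtain ⟨r, rfl, rfl⟩ := hxy
  exact Mem.precomp h r

theorem isFFMono_of_comp_eq (R : RelStr X Y) {W : C} {m : R.obj ⟶ W} {a : W ⟶ X} {b : W ⟶ Y}
    (ha : m ≫ a = R.p) (hb : m ≫ b = R.q) : IsFFMono m := by
  refine ⟨fun s t h => R.jointly_ff s t ?_ ?_, ⟨fun s t h => R.jointly_mono s t ?_ ?_⟩⟩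
  · simpa only [Category.assoc, ha] using h.whiskerRight a
  · simpa only [Category.assoc, hb] using h.whiskerRight b
  · rw [← ha, reassoc_of% h]
  · rw [← hb, reassoc_of% h]

/-- The relation represented by an ff-monomorphism into a 2-product, as the span of its
components. -/
def ofIsFFMono {I W : C} {a : W ⟶ X} {b : W ⟶ Y} (hW : Is2Product X Y W a b) (m : I ⟶ W)
    (hm : IsFFMono m) : RelStr X Y where
  obj := I
  p := m ≫ a
  q := m ≫ b
  jointly_ff s t ha hb :=
    hm.1 s t (hW.lift_ord (by simpa only [Category.assoc] using ha)
      (by simpa only [Category.assoc] using hb))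
  jointly_mono s t ha hb :=
    hm.2.right_cancellation s t (hW.hom_ext (by simpa only [Category.assoc] using ha)
      (by simpa only [Category.assoc] using hb))

end RelStr

theorem IsSO.mem_of_mem_comp {g : B ⟶ A} (hg : IsSO g) (hC : IsRegularOrd C) {R : RelStr X Y}
    {x : A ⟶ X} {y : A ⟶ Y} (h : R.Mem (g ≫ x) (g ≫ y)) : R.Mem x y := by
  obtain ⟨r, hrx, hry⟩ := h
  obtain ⟨W, a, b, hW⟩ := hC.has2Products X Y
  obtain ⟨m, ⟨hma, hmb⟩, -⟩ := hW.lift R.p R.q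
  obtain ⟨n, ⟨hna, hnb⟩, -⟩ := hW.lift x y
  have square : r ≫ m = g ≫ n := hW.hom_ext
    (by simp only [Category.assoc, hma, hna, hrx]) (by simp only [Category.assoc, hmb, hnb, hry])
  obtain ⟨d, -, hd⟩ := hg m (R.isFFMono_of_comp_eq hma hmb) r n square
  exact ⟨d, by rw [← hma, reassoc_of% hd, hna], by rw [← hmb, reassoc_of% hd, hnb]⟩

theorem IsCommaSq.mem_iff {f : X ⟶ Z} {g : Y ⟶ Z} {R : RelStr X Y}
    (hR : IsCommaSq f g R.obj R.p R.q) {x : A ⟶ X} {y : A ⟶ Y} :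
    R.Mem x y ↔ x ≫ f ≼ y ≫ g := by
  constructor
  · rintro ⟨r, rfl, rfl⟩
    simpa only [Category.assoc] using hR.le.whiskerLeft r
  · exact fun h => (hR.lift x y h).exists

theorem IsStarRel.mem_iff {f : X ⟶ Y} {R : RelStr X Y} (hR : IsStarRel f R)
    {x : A ⟶ X} {y : A ⟶ Y} : R.Mem x y ↔ x ≫ f ≼ y := by
  rw [IsCommaSq.mem_iff hR, Category.comp_id]

theorem IsCostarRel.mem_iff {f : X ⟶ Y} {R : RelStr Y X} (hR : IsCostarRel f R)
    {y : A ⟶ Y} {x : A ⟶ X} : R.Mem y x ↔ y ≼ x ≫ f := by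
  rw [IsCommaSq.mem_iff hR, Category.comp_id]

theorem IsIdRel.mem_iff {R : RelStr X X} (hR : IsIdRel X R) {x x' : A ⟶ X} :
    R.Mem x x' ↔ x ≼ x' := by
  rw [IsCommaSq.mem_iff hR, Category.comp_id, Category.comp_id]

theorem IsRegularOrd.exists_isCompositeRel (hC : IsRegularOrd C) (R : RelStr X Y)
    (S : RelStr Y Z) : ∃ T, IsCompositeRel R S T := by
  obtain ⟨P, p₁, p₂, hP⟩ := hC.has2Pullbacks R.q S.p
  obtain ⟨W, a, b, hW⟩ := hC.has2Products X Z
  obtain ⟨n, ⟨hna, hnb⟩, -⟩ := hW.lift (p₁ ≫ R.p) (p₂ ≫ S.q)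
  obtain ⟨I, e, m, he, hm, hem⟩ := hC.fact n
  refine ⟨.ofIsFFMono hW m hm, P, p₁, p₂, e, hP, he, ?_, ?_⟩
  · change e ≫ m ≫ a = _
    rw [reassoc_of% hem, hna]
  · change e ≫ m ≫ b = _
    rw [reassoc_of% hem, hnb]

theorem IsCompositeRel.mem_iff (hC : IsRegularOrd C) {R : RelStr X Y} {S : RelStr Y Z}
    {T : RelStr X Z} (hT : IsCompositeRel R S T) {x : A ⟶ X} {z : A ⟶ Z} :
    T.Mem x z ↔
      ∃ (Q : C) (g : Q ⟶ A) (y : Q ⟶ Y), IsSO g ∧ R.Mem (g ≫ x) y ∧ S.Mem y (g ≫ z) := by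
  obtain ⟨P, p₁, p₂, e, hP, he, hep, heq⟩ := hT
  constructor
  · rintro ⟨t, rfl, rfl⟩
    obtain ⟨Q, g, h, hQ⟩ := hC.has2Pullbacks t e
    refine ⟨Q, g, h ≫ p₁ ≫ R.q, hC.so_pullback_stable t e g h hQ he,
      ⟨h ≫ p₁, ?_, Category.assoc _ _ _⟩, ⟨h ≫ p₂, ?_, ?_⟩⟩
    · rw [reassoc_of% hQ.comm, hep, Category.assoc]
    · rw [hP.comm, Category.assoc]
    · rw [reassoc_of% hQ.comm, heq, Category.assoc]
  · rintro ⟨Q, g, y, hg, ⟨r, hrp, hrq⟩, ⟨s, hsp, hsq⟩⟩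
    obtain ⟨k, ⟨hk₁, hk₂⟩, -⟩ := hP.lift r s (hrq.trans hsp.symm)
    refine hg.mem_of_mem_comp hC ⟨k ≫ e, ?_, ?_⟩
    · rw [Category.assoc, hep, reassoc_of% hk₁, hrp]
    · rw [Category.assoc, heq, reassoc_of% hk₂, hsq]

/-- A morphism through which some so-morphism `g` factors up to equivalence in the preorder of the
hom-set. For preordered sets, where the so-morphisms are the surjections, this is essential
surjectivity; it is the condition on `f` that `f_* ∘ f^* ≅ I_Y` detects. -/
def IsEssentiallySO (f : X ⟶ Y) : Prop :=
  ∃ (Q : C) (g : Q ⟶ Y) (x : Q ⟶ X), IsSO g ∧ g ≼ x ≫ f ∧ x ≫ f ≼ g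

theorem IsSO.isEssentiallySO {f : X ⟶ Y} (hf : IsSO f) : IsEssentiallySO f :=
  ⟨X, f, 𝟙 X, hf, by rw [Category.id_comp]; exact .refl f, by rw [Category.id_comp]; exact .refl f⟩

theorem IsEssentiallySO.isSO_of_antisymm {f : X ⟶ Y} (hf : IsEssentiallySO f)
    (antisymm : ∀ (A : C) (u v : A ⟶ Y), u ≼ v → v ≼ u → u = v) : IsSO f := by
  obtain ⟨Q, g, x, hg, hgx, hxg⟩ := hf
  obtain rfl := antisymm Q g (x ≫ f) hgx hxg
  exact hg.of_comp

section StarCompCostar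

variable {f : X ⟶ Y} {I T : RelStr Y Y} {Fstar : RelStr X Y} {Fco : RelStr Y X}

theorem IsCompositeRel.mem_star_comp_costar_iff (hC : IsRegularOrd C)
    (hFstar : IsStarRel f Fstar) (hFco : IsCostarRel f Fco) (hT : IsCompositeRel Fco Fstar T)
    {y y' : A ⟶ Y} :
    T.Mem y y' ↔
      ∃ (Q : C) (g : Q ⟶ A) (x : Q ⟶ X), IsSO g ∧ g ≫ y ≼ x ≫ f ∧ x ≫ f ≼ g ≫ y' := by
  simp only [hT.mem_iff hC, hFco.mem_iff, hFstar.mem_iff]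

theorem IsCompositeRel.star_comp_costar_sub_id (hC : IsRegularOrd C) (hI : IsIdRel Y I)
    (hFstar : IsStarRel f Fstar) (hFco : IsCostarRel f Fco) (hT : IsCompositeRel Fco Fstar T) :
    T.Sub I := by
  obtain ⟨Q, g, x, hg, hle, hge⟩ := (hT.mem_star_comp_costar_iff hC hFstar hFco).1 T.mem_proj
  exact hI.mem_iff.2 (hg.le_of_comp_le hC (hle.trans hge))

theorem IsCompositeRel.id_sub_star_comp_costar_iff (hC : IsRegularOrd C) (hI : IsIdRel Y I)
    (hFstar : IsStarRel f Fstar) (hFco : IsCostarRel f Fco) (hT : IsCompositeRel Fco Fstar T) :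
    I.Sub T ↔ IsEssentiallySO f := by
  constructor
  · intro h
    have diagonal_mem : T.Mem (𝟙 Y) (𝟙 Y) := h.mem (hI.mem_iff.2 (.refl _))
    simpa only [IsEssentiallySO, Category.comp_id] using
      (hT.mem_star_comp_costar_iff hC hFstar hFco).1 diagonal_mem
  · rintro ⟨Q, g, x, hg, hgx, hxg⟩
    obtain ⟨Q', g', t, hQ'⟩ := hC.has2Pullbacks I.p g
    refine (hT.mem_star_comp_costar_iff hC hFstar hFco).2
      ⟨Q', g', t ≫ x, hC.so_pullback_stable I.p g g' t hQ' hg, ?_, ?_⟩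
    · rw [hQ'.comm, Category.assoc]
      exact hgx.whiskerLeft t
    · calc (t ≫ x) ≫ f = t ≫ x ≫ f := Category.assoc _ _ _
        _ ≼ t ≫ g := hxg.whiskerLeft t
        _ = g' ≫ I.p := hQ'.comm.symm
        _ ≼ g' ≫ I.q := (hI.mem_iff.1 I.mem_proj).whiskerLeft g'

theorem IsCompositeRel.star_comp_costar_iso_id_iff (hC : IsRegularOrd C) (hI : IsIdRel Y I)
    (hFstar : IsStarRel f Fstar) (hFco : IsCostarRel f Fco) (hT : IsCompositeRel Fco Fstar T) :
    T.Iso I ↔ IsEssentiallySO f :=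
  (and_iff_right (hT.star_comp_costar_sub_id hC hI hFstar hFco)).trans
    (hT.id_sub_star_comp_costar_iff hC hI hFstar hFco)

theorem statement3_general (hC : IsRegularOrd C) (hI : IsIdRel Y I) (hFstar : IsStarRel f Fstar)
    (hFco : IsCostarRel f Fco) :
    IsEssentiallySO f ↔ ∀ T : RelStr Y Y, IsCompositeRel Fco Fstar T → T.Iso I := by
  refine ⟨fun hf T hT => (hT.star_comp_costar_iso_id_iff hC hI hFstar hFco).2 hf, fun h => ?_⟩
  obtain ⟨T, hT⟩ := hC.exists_isCompositeRel Fco Fstar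
  exact (hT.star_comp_costar_iso_id_iff hC hI hFstar hFco).1 (h T hT)

end StarCompCostar

end

/-- (a) If `f` is an so-morphism then `f_* ∘ f^* ≅ I_Y`; (b) if moreover the
hom-preorders are partial orders, `f` is an so-morphism iff `f_* ∘ f^* ≅ I_Y`. -/
theorem statement3 {C : Type u} [Category.{v} C] [OrdEnrichment C] (hC : IsRegularOrd C)
    {X Y : C} (f : X ⟶ Y)
    (IY : RelStr Y Y) (hIY : IsIdRel Y IY)
    (Fstar : RelStr X Y) (hFstar : IsStarRel f Fstar)
    (Fco : RelStr Y X) (hFco : IsCostarRel f Fco) :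
    (IsSO f → ∀ T : RelStr Y Y, IsCompositeRel Fco Fstar T → T.Iso IY) ∧
    ((∀ (A B : C) (u v : A ⟶ B), u ≼ v → v ≼ u → u = v) →
      (IsSO f ↔ ∀ T : RelStr Y Y, IsCompositeRel Fco Fstar T → T.Iso IY)) := by
  have key := statement3_general hC hIY hFstar hFco
  exact ⟨fun hf => key.1 hf.isEssentiallySO, fun antisymm =>
    ⟨fun hf => key.1 hf.isEssentiallySO, fun h => (key.2 h).isSO_of_antisymm (antisymm · Y)⟩⟩
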